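/- For every k ≥ 1, the Burling graph G_k admits a tree-decomposition (T, {B_t}_{t ∈ V(T)}) such that for every S ∈ 𝒮(G_k) there exists t ∈ V(T) with B_t = S. -/

import Mathlib

/-!
The decomposition is built by induction along the Burling construction. Let `(T, B)` be a
decomposition of the previous graph `H` in which every set of the family `F` is a bag. For each
`S ∈ F` pick a node `t_S` of `T` with bag `S`, and hang below it a copy `T_S` of `T` whose bags are
the bags of `T` (placed in the copy `H_S`) enlarged by `S`. For each `X ∈ F`, hang below the node of
`T_S` with bag `S ∪ X` a path of two nodes with bags `S ∪ X ∪ {v_{S,X}}` and `S ∪ {v_{S,X}}`. The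
edges at `v_{S,X}` are covered by the first of these two, every set of the new family is a bag, and
a vertex of the master copy stays connected because the nodes `t_S` with `S` containing it lie in
its old support (`ParentDecomposition.step`).

All trees are encoded as rooted trees by a parent map that strictly decreases a depth function.
In this encoding, a set of nodes with a top node `m`, closed under taking the parent of any other
member, is connected (`parentGraph_induce_connected`), so no walks need to be handled in the
induction. Acyclicity holds because a deepest vertex of a cycle would have two distinct
neighbours on it, both equal to its parent (`parentGraph_isTree`).
-/

/-- Vertex type of the inductive step of the Burling construction:
given the vertex type `V` of the previous Burling graph and its distinguished
family `F` of vertex subsets, the new vertex set consists of the `master' copy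
(`Sum.inl`), and for each `S ∈ F` a fresh copy `H_S` of the previous graph
(vertices `Sum.inr (S, Sum.inl v)`) together with, for each `X ∈ F`
(i.e. each distinguished set of `H_S`), a new vertex `v_{S,X}`
(namely `Sum.inr (S, Sum.inr X)`). -/
abbrev BurlingVertexStep (V : Type) (F : Set (Set V)) : Type :=
  V ⊕ (↥F × (V ⊕ ↥F))

/-- Adjacency (before symmetrization) for the inductive step: the master copy keeps its
edges, each copy `H_S` keeps its edges, and the new vertex `v_{S,X}` is joined exactly to
the vertices of `X` inside the copy `H_S`. -/
def BurlingRel {V : Type} (G : SimpleGraph V) (F : Set (Set V)) :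
    BurlingVertexStep V F → BurlingVertexStep V F → Prop
  | Sum.inl u, Sum.inl v => G.Adj u v
  | Sum.inr (S, Sum.inl u), Sum.inr (S', Sum.inl v) => S = S' ∧ G.Adj u v
  | Sum.inr (S, Sum.inr X), Sum.inr (S', Sum.inl v) => S = S' ∧ v ∈ (X : Set V)
  | _, _ => False

/-- The distinguished family for the inductive step: for each `S ∈ F` and `X ∈ F`
(thought of as a distinguished set of the copy `H_S`), the sets `S ∪ X` and
`S ∪ {v_{S,X}}`. -/
def BurlingFam {V : Type} (F : Set (Set V)) : Set (Set (BurlingVertexStep V F)) :=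
  {A | ∃ S X : ↥F,
    A = Sum.inl '' (S : Set V) ∪ (fun v => Sum.inr (S, Sum.inl v)) '' (X : Set V) ∨
    A = Sum.inl '' (S : Set V) ∪ {Sum.inr (S, Sum.inr X)}}

/-- The Burling construction, `0`-indexed: `burlingAux n` bundles the vertex type,
the graph, and the distinguished family of stable sets of the Burling graph `G_{n+1}`.
`G_1` is a single vertex whose family consists of the single-vertex set. -/
def burlingAux : ℕ → (V : Type) × SimpleGraph V × Set (Set V)
  | 0 => ⟨Unit, ⊥, {Set.univ}⟩
  | n + 1 =>
    ⟨BurlingVertexStep (burlingAux n).1 (burlingAux n).2.2,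
     SimpleGraph.fromRel (BurlingRel (burlingAux n).2.1 (burlingAux n).2.2),
     BurlingFam (burlingAux n).2.2⟩

/-- The vertex type of the Burling graph `G_k` (for `k ≥ 1`). -/
def BurlingVertex (k : ℕ) : Type := (burlingAux (k - 1)).1

/-- The Burling graph `G_k` (for `k ≥ 1`). -/
def BurlingGraph (k : ℕ) : SimpleGraph (BurlingVertex k) := (burlingAux (k - 1)).2.1

/-- The distinguished family `𝒮(G_k)` of vertex subsets of the Burling graph `G_k`. -/
def BurlingFamily (k : ℕ) : Set (Set (BurlingVertex k)) := (burlingAux (k - 1)).2.2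

/-- A tree-decomposition of a graph `G`: a tree `T` (on an index type `ι`) together with
bags `bag t ⊆ V(G)` such that both endpoints of every edge of `G` lie in a common bag and,
for every vertex `v`, the set of indices whose bag contains `v` induces a nonempty
connected subgraph (i.e. a subtree) of `T`. -/
structure TreeDecomposition (V : Type) (G : SimpleGraph V) where
  ι : Type
  T : SimpleGraph ι
  isTree : T.IsTree
  bag : ι → Set V
  edge_mem : ∀ ⦃u v : V⦄, G.Adj u v → ∃ t, u ∈ bag t ∧ v ∈ bag t
  support_connected : ∀ v : V, (SimpleGraph.induce {t | v ∈ bag t} T).Connected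

/-- A path-decomposition of a graph `G`: bags indexed by a linearly ordered type
(the vertices of the path, in order) such that both endpoints of every edge of `G` lie in
a common bag and, for every vertex `v`, the set of indices whose bag contains `v` is a
nonempty interval (i.e. a nonempty subpath). -/
structure PathDecomposition (V : Type) (G : SimpleGraph V) where
  ι : Type
  [linOrd : LinearOrder ι]
  bag : ι → Set V
  edge_mem : ∀ ⦃u v : V⦄, G.Adj u v → ∃ p, u ∈ bag p ∧ v ∈ bag p
  support_nonempty : ∀ v : V, ∃ p, v ∈ bag p
  support_interval : ∀ v : V, {p | v ∈ bag p}.OrdConnected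

/-! ### Trees given by a parent map -/

/-- The graph on `ι` joining every node other than `root` to its parent. The value of `p` at
`root` plays no role. -/
def parentGraph {ι : Type} (root : ι) (p : ι → ι) : SimpleGraph ι :=
  SimpleGraph.fromRel fun s t => s ≠ root ∧ p s = t

theorem parentGraph_adj_parent {ι : Type} {root : ι} {p : ι → ι} {d : ι → ℕ}
    (hd : ∀ t, t ≠ root → d (p t) < d t) {t : ι} (ht : t ≠ root) :
    (parentGraph root p).Adj t (p t) := by
  rw [parentGraph, SimpleGraph.fromRel_adj]
  refine ⟨fun h => ?_, Or.inl ⟨ht, rfl⟩⟩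
  have := hd t ht
  rw [← h] at this
  exact lt_irrefl _ this

/-- A neighbour that is not deeper than `s` is the parent of `s`. -/
theorem parentGraph_eq_parent {ι : Type} {root : ι} {p : ι → ι} {d : ι → ℕ}
    (hd : ∀ t, t ≠ root → d (p t) < d t) {s t : ι} (h : (parentGraph root p).Adj s t)
    (hle : d t ≤ d s) : t = p s := by
  rw [parentGraph, SimpleGraph.fromRel_adj] at h
  rcases h.2 with h | h
  · exact h.2.symm
  · have := hd t h.1
    rw [h.2] at this
    omega

/-- Climbing to the parent from any node of `A` other than `m` stays in `A` and, as the depth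
decreases, ends at `m`. -/
theorem parentGraph_induce_connected {ι : Type} {root : ι} {p : ι → ι} {d : ι → ℕ}
    (hd : ∀ t, t ≠ root → d (p t) < d t) (A : Set ι) (m : ι) (hm : m ∈ A)
    (hA : ∀ t ∈ A, t = m ∨ (t ≠ root ∧ p t ∈ A)) :
    (SimpleGraph.induce A (parentGraph root p)).Connected := by
  have key : ∀ n : ℕ, ∀ t (ht : t ∈ A), d t = n →
      (SimpleGraph.induce A (parentGraph root p)).Reachable ⟨m, hm⟩ ⟨t, ht⟩ := by
    intro n
    induction n using Nat.strong_induction_on with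
    | _ n ih =>
      intro t ht hn
      rcases hA t ht with rfl | ⟨hr, hp⟩
      · exact SimpleGraph.Reachable.refl _
      · refine (ih (d (p t)) (hn ▸ hd t hr) (p t) hp rfl).trans ?_
        refine SimpleGraph.Adj.reachable ?_
        exact (parentGraph_adj_parent hd hr).symm
  rw [SimpleGraph.connected_iff_exists_forall_reachable]
  exact ⟨⟨m, hm⟩, fun t => key _ t.1 t.2 rfl⟩

theorem parentGraph_isTree {ι : Type} {root : ι} {p : ι → ι} {d : ι → ℕ}
    (hd : ∀ t, t ≠ root → d (p t) < d t) : (parentGraph root p).IsTree := by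
  classical
  refine ⟨?_, ?_⟩
  · have h := parentGraph_induce_connected hd Set.univ root trivial
      (fun t _ => or_iff_not_imp_left.2 fun h => ⟨h, trivial⟩)
    exact (SimpleGraph.induceUnivIso _).connected_iff.1 h
  · intro v c hc
    obtain ⟨u, hu, hmax⟩ := c.support.toFinset.exists_max_image d
      ⟨v, by simp⟩
    rw [List.mem_toFinset] at hu
    have hc' := hc.rotate hu
    have hle : ∀ w ∈ (c.rotate u hu).support, d w ≤ d u := fun w hw =>
      hmax w (by simpa using hw)
    have h1 := parentGraph_eq_parent hd ((c.rotate u hu).adj_snd hc'.not_nil)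
      (hle _ ((c.rotate u hu).getVert_mem_support _))
    have h2 := parentGraph_eq_parent hd ((c.rotate u hu).adj_penultimate hc'.not_nil).symm
      (hle _ ((c.rotate u hu).getVert_mem_support _))
    exact hc'.snd_ne_penultimate (h1.trans h2.symm)

/-! ### Decompositions along rooted trees -/

/-- A tree-decomposition of `G` along a rooted tree given by a parent map `p` (meaningless at
`root`), in which every set of `F` occurs as a bag. Connectedness of the support of a vertex is
expressed by a top node from which all other nodes of the support hang. -/
structure ParentDecomposition (V : Type) (G : SimpleGraph V) (F : Set (Set V)) where
  ι : Type
  root : ι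
  p : ι → ι
  d : ι → ℕ
  d_lt : ∀ t, t ≠ root → d (p t) < d t
  bag : ι → Set V
  edge_mem : ∀ ⦃u v : V⦄, G.Adj u v → ∃ t, u ∈ bag t ∧ v ∈ bag t
  support : ∀ v, ∃ m, v ∈ bag m ∧ ∀ t, v ∈ bag t → t = m ∨ (t ≠ root ∧ v ∈ bag (p t))
  fam : ∀ S ∈ F, ∃ t, bag t = S

namespace ParentDecomposition

def toTreeDecomposition {V : Type} {G : SimpleGraph V} {F : Set (Set V)}
    (D : ParentDecomposition V G F) : TreeDecomposition V G where
  ι := D.ι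
  T := parentGraph D.root D.p
  isTree := parentGraph_isTree D.d_lt
  bag := D.bag
  edge_mem := D.edge_mem
  support_connected v := by
    obtain ⟨m, hm, h⟩ := D.support v
    exact parentGraph_induce_connected D.d_lt _ m hm h

/-! ### The inductive step -/

section Step

variable {V : Type} {F : Set (Set V)} {ι : Type}

/-- Nodes of the decomposition of the next graph: the old tree, and for each `S ∈ F` a copy of
the old tree together with two further nodes for each `X ∈ F`, the one labelled `false` being the
parent of the one labelled `true`. -/
abbrev StepNode (F : Set (Set V)) (ι : Type) : Type :=
  ι ⊕ (↥F × (ι ⊕ (↥F × Bool)))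

open Classical in
/-- Parent map of the next tree, where `τ S` is a node of the old tree with bag `S`. -/
noncomputable def stepParent (root : ι) (p : ι → ι) (τ : ↥F → ι) : StepNode F ι → StepNode F ι
  | Sum.inl t => Sum.inl (p t)
  | Sum.inr (S, Sum.inl t) => if t = root then Sum.inl (τ S) else Sum.inr (S, Sum.inl (p t))
  | Sum.inr (S, Sum.inr (X, false)) => Sum.inr (S, Sum.inl (τ X))
  | Sum.inr (S, Sum.inr (X, true)) => Sum.inr (S, Sum.inr (X, false))

/-- Depth function of the next tree. -/
def stepDepth (d : ι → ℕ) (τ : ↥F → ι) : StepNode F ι → ℕ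
  | Sum.inl t => d t
  | Sum.inr (S, Sum.inl t) => d (τ S) + 1 + d t
  | Sum.inr (S, Sum.inr (X, false)) => d (τ S) + 1 + d (τ X) + 1
  | Sum.inr (S, Sum.inr (X, true)) => d (τ S) + 1 + d (τ X) + 2

/-- Membership of a vertex in a bag of the next decomposition. -/
def stepMem (bag : ι → Set V) : BurlingVertexStep V F → StepNode F ι → Prop
  | Sum.inl v, Sum.inl t => v ∈ bag t
  | Sum.inl v, Sum.inr (S, _) => v ∈ (S : Set V)
  | Sum.inr _, Sum.inl _ => False
  | Sum.inr (S, Sum.inl v), Sum.inr (S', Sum.inl t) => S = S' ∧ v ∈ bag t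
  | Sum.inr (S, Sum.inl v), Sum.inr (S', Sum.inr (X, false)) => S = S' ∧ v ∈ (X : Set V)
  | Sum.inr (_, Sum.inl _), Sum.inr (_, Sum.inr (_, true)) => False
  | Sum.inr (_, Sum.inr _), Sum.inr (_, Sum.inl _) => False
  | Sum.inr (S, Sum.inr X), Sum.inr (S', Sum.inr (X', _)) => S = S' ∧ X = X'

end Step

/-- Edges inside a copy of the old graph are covered by the corresponding copy of the old tree, and
the edges from `v_{S,X}` to `X` by the node labelled `false`. -/
theorem exists_stepMem_of_rel {V : Type} {G : SimpleGraph V} {F : Set (Set V)}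
    (D : ParentDecomposition V G F) :
    ∀ u v : BurlingVertexStep V F, BurlingRel G F u v →
      ∃ t, stepMem D.bag u t ∧ stepMem D.bag v t
  | Sum.inl u, Sum.inl v, h => by
    obtain ⟨t, h1, h2⟩ := D.edge_mem h
    exact ⟨Sum.inl t, h1, h2⟩
  | Sum.inr (S, Sum.inl u), Sum.inr (S', Sum.inl v), h => by
    obtain ⟨rfl, h⟩ := h
    obtain ⟨t, h1, h2⟩ := D.edge_mem h
    exact ⟨Sum.inr (S, Sum.inl t), ⟨rfl, h1⟩, ⟨rfl, h2⟩⟩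
  | Sum.inr (S, Sum.inr X), Sum.inr (S', Sum.inl v), h => by
    obtain ⟨rfl, h⟩ := h
    exact ⟨Sum.inr (S, Sum.inr (X, false)), ⟨rfl, rfl⟩, ⟨rfl, h⟩⟩
  | Sum.inl _, Sum.inr _, h => by simp [BurlingRel] at h
  | Sum.inr _, Sum.inl _, h => by simp [BurlingRel] at h
  | Sum.inr (_, Sum.inl _), Sum.inr (_, Sum.inr _), h => by simp [BurlingRel] at h
  | Sum.inr (_, Sum.inr _), Sum.inr (_, Sum.inr _), h => by simp [BurlingRel] at h

theorem step_d_lt {V : Type} {G : SimpleGraph V} {F : Set (Set V)}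
    (D : ParentDecomposition V G F) (τ : ↥F → D.ι) :
    ∀ t : StepNode F D.ι, t ≠ Sum.inl D.root →
      stepDepth D.d τ (stepParent D.root D.p τ t) < stepDepth D.d τ t
  | Sum.inl t, h => D.d_lt t fun e => h (congrArg _ e)
  | Sum.inr (S, Sum.inl t), _ => by
    by_cases ht : t = D.root
    · simp only [stepParent, if_pos ht, stepDepth]
      omega
    · have := D.d_lt t ht
      simp only [stepParent, if_neg ht, stepDepth]
      omega
  | Sum.inr (S, Sum.inr (X, false)), _ => by simp [stepParent, stepDepth]
  | Sum.inr (S, Sum.inr (X, true)), _ => by simp [stepParent, stepDepth]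

/-- The top node of a vertex of the master copy or of a copy `H_S` is inherited from the old tree; for
`v_{S,X}` it is the node labelled `false`. -/
theorem step_support {V : Type} {G : SimpleGraph V} {F : Set (Set V)}
    (D : ParentDecomposition V G F) (τ : ↥F → D.ι) (hτ : ∀ S, D.bag (τ S) = S) :
    ∀ v : BurlingVertexStep V F, ∃ m, stepMem D.bag v m ∧ ∀ t, stepMem D.bag v t →
      t = m ∨ (t ≠ Sum.inl D.root ∧ stepMem D.bag v (stepParent D.root D.p τ t))
  | Sum.inl v => by
    obtain ⟨m, hm, h⟩ := D.support v
    refine ⟨Sum.inl m, hm, ?_⟩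
    rintro (t | ⟨S, t | ⟨X, _ | _⟩⟩) ht
    · rcases h t ht with rfl | ⟨h1, h2⟩
      · exact Or.inl rfl
      · exact Or.inr ⟨fun e => h1 (Sum.inl_injective e), h2⟩
    · refine Or.inr ⟨Sum.inr_ne_inl, ?_⟩
      change v ∈ (S : Set V) at ht
      by_cases hr : t = D.root
      · simpa [stepParent, hr, stepMem, hτ] using ht
      · simpa [stepParent, hr, stepMem] using ht
    · exact Or.inr ⟨Sum.inr_ne_inl, ht⟩
    · exact Or.inr ⟨Sum.inr_ne_inl, ht⟩
  | Sum.inr (S, Sum.inl v) => by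
    obtain ⟨m, hm, h⟩ := D.support v
    refine ⟨Sum.inr (S, Sum.inl m), ⟨rfl, hm⟩, ?_⟩
    rintro (t | ⟨S', t | ⟨X, _ | _⟩⟩) ht
    · exact ht.elim
    · obtain ⟨rfl, ht⟩ := ht
      rcases h t ht with rfl | ⟨h1, h2⟩
      · exact Or.inl rfl
      · refine Or.inr ⟨Sum.inr_ne_inl, ?_⟩
        simpa [stepParent, h1, stepMem] using h2
    · obtain ⟨rfl, ht⟩ := ht
      refine Or.inr ⟨Sum.inr_ne_inl, rfl, ?_⟩
      rw [hτ]
      exact ht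
    · exact ht.elim
  | Sum.inr (S, Sum.inr X) => by
    refine ⟨Sum.inr (S, Sum.inr (X, false)), ⟨rfl, rfl⟩, ?_⟩
    rintro (t | ⟨S', t | ⟨X', _ | _⟩⟩) ht
    · exact ht.elim
    · exact ht.elim
    · obtain ⟨rfl, rfl⟩ := ht
      exact Or.inl rfl
    · exact Or.inr ⟨Sum.inr_ne_inl, ht⟩

/-- `S ∪ X` is the bag of the node `τ X` in the copy attached at `S`, and `S ∪ {v_{S,X}}` is the bag
of the leaf labelled `true`. -/
theorem step_fam {V : Type} {G : SimpleGraph V} {F : Set (Set V)}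
    (D : ParentDecomposition V G F) (τ : ↥F → D.ι) (hτ : ∀ S, D.bag (τ S) = S) :
    ∀ A ∈ BurlingFam F, ∃ t : StepNode F D.ι, {v | stepMem D.bag v t} = A := by
  rintro A ⟨S, X, rfl | rfl⟩
  · refine ⟨Sum.inr (S, Sum.inl (τ X)), ?_⟩
    ext (v | ⟨S', v | X'⟩)
    · simp [stepMem]
    · simp only [Set.mem_ofPred_eq, stepMem, hτ]
      simp [and_comm, eq_comm]
    · simp [stepMem]
  · refine ⟨Sum.inr (S, Sum.inr (X, true)), ?_⟩
    ext (v | ⟨S', v | X'⟩)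
    · simp [stepMem]
    · simp [stepMem]
    · simp [stepMem]

theorem step {V : Type} {G : SimpleGraph V} {F : Set (Set V)}
    (D : ParentDecomposition V G F) :
    Nonempty (ParentDecomposition (BurlingVertexStep V F)
      (SimpleGraph.fromRel (BurlingRel G F)) (BurlingFam F)) := by
  have hex : ∀ S : ↥F, ∃ t, D.bag t = S := fun S => D.fam S S.2
  choose τ hτ using hex
  exact ⟨{
    ι := StepNode F D.ι
    root := Sum.inl D.root
    p := stepParent D.root D.p τ
    d := stepDepth D.d τ
    d_lt := step_d_lt D τ
    bag := fun t => {v | stepMem D.bag v t}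
    edge_mem := by
      intro u v h
      rw [SimpleGraph.fromRel_adj] at h
      rcases h.2 with h | h
      · exact exists_stepMem_of_rel D u v h
      · obtain ⟨t, h1, h2⟩ := exists_stepMem_of_rel D v u h
        exact ⟨t, h2, h1⟩
    support := step_support D τ hτ
    fam := step_fam D τ hτ }⟩

theorem nonempty_burlingAux : ∀ n : ℕ,
    Nonempty (ParentDecomposition (burlingAux n).1 (burlingAux n).2.1 (burlingAux n).2.2)
  | 0 => ⟨{
      ι := Unit
      root := ()
      p := id
      d := fun _ => 0
      d_lt := fun _ h => (h rfl).elim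
      bag := fun _ => Set.univ
      edge_mem := fun _ _ _ => ⟨(), trivial, trivial⟩
      support := fun _ => ⟨(), trivial, fun _ _ => Or.inl rfl⟩
      fam := fun _ hS => ⟨(), (Set.mem_singleton_iff.1 hS).symm⟩ }⟩
  | n + 1 => by
    obtain ⟨D⟩ := nonempty_burlingAux n
    exact D.step

end ParentDecomposition

/-- For every `k ≥ 1`, the Burling graph `G_k` admits a
tree-decomposition `(T, {B_t})` such that every `S ∈ 𝒮(G_k)` occurs as a bag `B_t`. -/
theorem burling_tree_decomposition_with_family_bags :
    ∀ k : ℕ, 1 ≤ k →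
      ∃ td : TreeDecomposition (BurlingVertex k) (BurlingGraph k),
        ∀ S ∈ BurlingFamily k, ∃ t : td.ι, td.bag t = S := by
  intro k _
  obtain ⟨D⟩ := ParentDecomposition.nonempty_burlingAux (k - 1)
  exact ⟨D.toTreeDecomposition, D.fam⟩
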